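/- arXiv:1412.7752 — 2 statements merged into one kernel-verified Lean document; each statement's English description precedes it below -/
import Mathlib

section
/- Let W be a one-sided infinite word over the two-letter alphabet {a, b}. Then the complexity function of W satisfies T_W(n) = n + 1 for all n ≥ 0 if and only if W is balanced and not eventually periodic. -/
/-!
A factor is right special when it can be prolonged by two different letters. Over two letters,
`T (n + 1) - T n` is the number of right special factors of length `n`, so `T n = n + 1` for all
`n` says that there is exactly one of each length. If none of the factors met between two
occurrences of the same factor is right special, the word repeats itself from then on; hence an
aperiodic word has right special factors of every length. Two right special factors of the same
length differ at some letter; comparing them from the last such place on yields a word `z` for which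
`a z a` and `b z b` are both factors, which balance forbids.

Conversely, a shortest unbalanced pair has the form `a w a`, `b w b` with `w` a palindrome. The only
right special factor one letter longer than `w` is `d w` for a letter `d`; let `c` be the other
letter. Since `c w c` is a palindrome, `d w` starts at none of the `|w| + 2` positions of an
occurrence of `c w c`. Only `|w| + 1` other factors of that length exist, so one of them recurs
there without a right special factor in between, and the word is eventually periodic. But then its
complexity is bounded.
-/

/-- The factor of the infinite word `W` of length `n` starting at position `i`. -/
def factorAt {A : Type*} (W : ℕ → A) (i n : ℕ) : List A :=
  (List.range n).map (fun j => W (i + j))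

/-- `u` is a factor (subword) of the infinite word `W`. -/
def IsFactor {A : Type*} (W : ℕ → A) (u : List A) : Prop :=
  ∃ i, u = factorAt W i u.length

/-- The complexity function: the number of distinct factors of `W` of length `n`. -/
noncomputable def complexity {A : Type*} (W : ℕ → A) (n : ℕ) : ℕ :=
  Set.ncard {u : List A | u.length = n ∧ IsFactor W u}

/-- `W` (over the two-letter alphabet `Bool`, where `true` plays the role of
the letter `a`) is balanced: any two factors of equal length have numbers of
occurrences of the letter `a` differing by at most `1`. -/
def BalancedWord (W : ℕ → Bool) : Prop :=
  ∀ u v : List Bool, IsFactor W u → IsFactor W v → u.length = v.length →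
    ((u.count true : ℤ) - (v.count true : ℤ)).natAbs ≤ 1

/-- `W` is eventually periodic. -/
def EventuallyPeriodic {A : Type*} (W : ℕ → A) : Prop :=
  ∃ p : ℕ, 1 ≤ p ∧ ∃ N : ℕ, ∀ n ≥ N, W (n + p) = W n

section Lists

variable {A : Type*} {u v : List A}

theorem exists_eq_append_cons_of_ne (hlen : u.length = v.length) (hne : u ≠ v) :
    ∃ x y a b z, a ≠ b ∧ u = x ++ a :: z ∧ v = y ++ b :: z := by
  induction u generalizing v with
  | nil => exact absurd (List.length_eq_zero_iff.1 hlen.symm).symm hne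
  | cons a u ih =>
    obtain _ | ⟨b, v⟩ := v
    · simp at hlen
    by_cases huv : u = v
    · exact ⟨[], [], a, b, v, fun hab ↦ hne (by rw [hab, huv]), by rw [huv]; rfl, rfl⟩
    · obtain ⟨x, y, a', b', z, hab, rfl, rfl⟩ := ih (by simpa using hlen) huv
      exact ⟨a :: x, b :: y, a', b', z, hab, rfl, rfl⟩

theorem exists_eq_cons_concat_of_two_le_length (hu : 2 ≤ u.length) :
    ∃ a w b, u = a :: (w ++ [b]) := by
  obtain _ | ⟨a, u⟩ := u
  · simp at hu
  obtain rfl | ⟨w, b, rfl⟩ := u.eq_nil_or_concat'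
  · simp at hu
  · exact ⟨a, w, b, rfl⟩

end Lists

section MinimalUnbalanced

variable {u v : List Bool}

theorem eq_of_count_take_eq (hlen : u.length = v.length)
    (h : ∀ k ≤ u.length, (u.take k).count true = (v.take k).count true) : u = v := by
  induction u generalizing v with
  | nil => exact (List.length_eq_zero_iff.1 hlen.symm).symm
  | cons a u ih =>
    obtain _ | ⟨b, v⟩ := v
    · simp at hlen
    have hab : a = b := by
      have := h 1 (by simp)
      cases a <;> cases b <;> simp_all
    subst hab
    rw [ih (by simpa using hlen) fun k hk ↦ ?_]
    simpa [List.count_cons] using h (k + 1) (by simpa)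

theorem count_take_of_minimal_unbalanced (hlen : u.length = v.length)
    (hcount : v.count true + 2 ≤ u.count true)
    (hmin : ∀ x y, x <:+: u → y <:+: v → x.length = y.length → x.length < u.length →
      x.count true ≤ y.count true + 1) {k : ℕ} (hk : 0 < k) (hku : k < u.length) :
    (u.take k).count true = (v.take k).count true + 1 := by
  have htake := hmin (u.take k) (v.take k) (u.take_prefix k).isInfix (v.take_prefix k).isInfix
    (by simp [hlen]) (by simpa)
  have hdrop := hmin (u.drop k) (v.drop k) (u.drop_suffix k).isInfix (v.drop_suffix k).isInfix
    (by simp [hlen]) (by rw [List.length_drop]; omega)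
  have hu : u.count true = (u.take k).count true + (u.drop k).count true := by
    rw [← List.count_append, List.take_append_drop]
  have hv : v.count true = (v.take k).count true + (v.drop k).count true := by
    rw [← List.count_append, List.take_append_drop]
  omega

theorem exists_eq_cons_concat_of_minimal_unbalanced (hlen : u.length = v.length)
    (hcount : v.count true + 2 ≤ u.count true)
    (hmin : ∀ x y, x <:+: u → y <:+: v → x.length = y.length → x.length < u.length →
      x.count true ≤ y.count true + 1) :
    ∃ w, u = true :: (w ++ [true]) ∧ v = false :: (w ++ [false]) := by
  have hu : 2 ≤ u.length := by
    have := u.count_le_length (a := true)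
    omega
  have htake {k : ℕ} := count_take_of_minimal_unbalanced hlen hcount hmin (k := k)
  obtain ⟨a, w, c, rfl⟩ := exists_eq_cons_concat_of_two_le_length hu
  obtain ⟨b, w', d, rfl⟩ := exists_eq_cons_concat_of_two_le_length (hlen ▸ hu)
  have hww' : w.length = w'.length := by simpa using hlen
  have hfirst : [a].count true = [b].count true + 1 := htake one_pos hu
  obtain ⟨rfl, rfl⟩ : a = true ∧ b = false := by
    cases a <;> cases b <;> simp at hfirst ⊢
  obtain rfl : w = w' := eq_of_count_take_eq hww' fun k hk ↦ by
    have := htake k.succ_pos (by simpa using Nat.lt_succ_of_le hk)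
    simpa [List.take_append_of_le_length hk, List.take_append_of_le_length (hww' ▸ hk)] using this
  obtain ⟨rfl, rfl⟩ : c = true ∧ d = false := by
    cases c <;> cases d <;> simp at hcount ⊢
  exact ⟨w, rfl, rfl⟩

end MinimalUnbalanced

section Factors

variable {A : Type*} {W : ℕ → A} {u v : List A} {i j n : ℕ}

@[simp]
theorem length_factorAt (W : ℕ → A) (i n : ℕ) : (factorAt W i n).length = n := by
  simp [factorAt]

@[simp]
theorem getElem_factorAt (W : ℕ → A) (i : ℕ) {n k : ℕ} (hk : k < (factorAt W i n).length) :
    (factorAt W i n)[k] = W (i + k) := by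
  simp [factorAt]

theorem apply_add_eq_of_factorAt_eq (h : factorAt W i n = factorAt W j n) {k : ℕ} (hk : k < n) :
    W (i + k) = W (j + k) := by
  rw [← getElem_factorAt W i (by simpa), ← getElem_factorAt W j (by simpa)]
  exact List.getElem_of_eq h _

theorem apply_add_eq_of_palindrome_factorAt (h : (factorAt W i n).Palindrome) {k : ℕ}
    (hk : k < n) : W (i + k) = W (i + (n - 1 - k)) := by
  have hrev := List.getElem_of_eq h.reverse_eq (i := k) (by simpa)
  rw [List.getElem_reverse] at hrev
  simpa using hrev.symm

theorem factorAt_add (W : ℕ → A) (i m n : ℕ) :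
    factorAt W i (m + n) = factorAt W i m ++ factorAt W (i + m) n := by
  simp [factorAt, List.range_add, add_assoc]

theorem factorAt_succ (W : ℕ → A) (i n : ℕ) :
    factorAt W i (n + 1) = factorAt W i n ++ [W (i + n)] := by
  rw [factorAt_add]
  simp [factorAt]

theorem factorAt_succ' (W : ℕ → A) (i n : ℕ) :
    factorAt W i (n + 1) = W i :: factorAt W (i + 1) n := by
  rw [add_comm n, factorAt_add]
  simp [factorAt]

theorem isFactor_factorAt (W : ℕ → A) (i n : ℕ) : IsFactor W (factorAt W i n) :=
  ⟨i, by rw [length_factorAt]⟩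

theorem IsFactor.of_infix (hv : IsFactor W v) (huv : u <:+: v) : IsFactor W u := by
  obtain ⟨i, hi⟩ := hv
  obtain ⟨s, t, rfl⟩ := huv
  rw [List.length_append, List.length_append, factorAt_add, factorAt_add] at hi
  have hsu := List.append_inj_left hi (by simp)
  exact ⟨i + s.length, List.append_inj_right hsu (by simp)⟩

theorem IsFactor.exists_concat (hu : IsFactor W u) : ∃ a, IsFactor W (u ++ [a]) := by
  obtain ⟨i, hi⟩ := hu
  refine ⟨W (i + u.length), i, ?_⟩
  rw [List.length_append, List.length_singleton, factorAt_succ, ← hi]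

/-- The factors of `W` of length `n`, which `complexity W n` counts. -/
def factorSet (W : ℕ → A) (n : ℕ) : Set (List A) :=
  {u | u.length = n ∧ IsFactor W u}

theorem factorAt_mem_factorSet (W : ℕ → A) (i n : ℕ) : factorAt W i n ∈ factorSet W n :=
  ⟨length_factorAt W i n, isFactor_factorAt W i n⟩

theorem factorSet_eq_range (W : ℕ → A) (n : ℕ) :
    factorSet W n = Set.range fun i ↦ factorAt W i n := by
  refine Set.Subset.antisymm ?_ (Set.range_subset_iff.2 fun i ↦ factorAt_mem_factorSet W i n)
  rintro u ⟨rfl, i, hi⟩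
  exact ⟨i, hi.symm⟩

theorem finite_factorSet [Finite A] (W : ℕ → A) (n : ℕ) : (factorSet W n).Finite :=
  (List.finite_length_eq A n).subset fun _ hu ↦ hu.1

theorem ncard_factorSet (W : ℕ → A) (n : ℕ) : (factorSet W n).ncard = complexity W n :=
  rfl

theorem complexity_zero (W : ℕ → A) : complexity W 0 = 1 := by
  rw [← ncard_factorSet, factorSet_eq_range]
  simp [factorAt]

theorem EventuallyPeriodic.exists_complexity_le (hW : EventuallyPeriodic W) :
    ∃ C, ∀ n, complexity W n ≤ C := by
  obtain ⟨p, hp, N, hN⟩ := hW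
  refine ⟨N + p, fun n ↦ ?_⟩
  have hper : Function.Periodic (fun k ↦ factorAt W (N + k) n) p := fun k ↦
    List.ext_getElem (by simp) fun l _ _ ↦ by
      rw [getElem_factorAt, getElem_factorAt, ← hN (N + k + l) (by omega)]
      congr 1
      omega
  have hsub : factorSet W n ⊆ (fun i ↦ factorAt W i n) '' Set.Iio (N + p) := by
    rw [factorSet_eq_range]
    rintro _ ⟨i, rfl⟩
    obtain hi | hi := lt_or_ge i N
    · exact ⟨i, Nat.lt_add_right p hi, rfl⟩
    · obtain ⟨k, rfl⟩ := Nat.exists_eq_add_of_le hi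
      exact ⟨N + k % p, Nat.add_lt_add_left (Nat.mod_lt k hp) N, hper.map_mod_nat k⟩
  calc complexity W n
      ≤ ((fun i ↦ factorAt W i n) '' Set.Iio (N + p)).ncard :=
        Set.ncard_le_ncard hsub ((Set.finite_Iio _).image _)
    _ ≤ (Set.Iio (N + p)).ncard := Set.ncard_image_le (Set.finite_Iio _)
    _ = N + p := Set.ncard_Iio_nat _

theorem not_eventuallyPeriodic_of_complexity_eq_succ (hcomp : ∀ n, complexity W n = n + 1) :
    ¬ EventuallyPeriodic W := by
  intro hW
  obtain ⟨C, hC⟩ := hW.exists_complexity_le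
  have := hC C
  rw [hcomp] at this
  omega

end Factors

section RightSpecial

variable {A : Type*} {W : ℕ → A} {u v : List A} {c d : A} {i j n : ℕ}

/-- A word is right special in `W` if two different one-letter prolongations of it to the right are
factors of `W`; it is then itself a factor of `W`. -/
def IsRightSpecial (W : ℕ → A) (u : List A) : Prop :=
  ∃ a b, a ≠ b ∧ IsFactor W (u ++ [a]) ∧ IsFactor W (u ++ [b])

theorem IsRightSpecial.isFactor (hu : IsRightSpecial W u) : IsFactor W u := by
  obtain ⟨a, -, -, ha, -⟩ := hu
  exact ha.of_infix (List.prefix_append u [a]).isInfix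

theorem IsRightSpecial.of_suffix (hv : IsRightSpecial W v) (huv : u <:+ v) :
    IsRightSpecial W u := by
  obtain ⟨a, b, hab, ha, hb⟩ := hv
  obtain ⟨s, rfl⟩ := huv
  rw [List.append_assoc] at ha hb
  exact ⟨a, b, hab, ha.of_infix (List.suffix_append s _).isInfix,
    hb.of_infix (List.suffix_append s _).isInfix⟩

theorem apply_add_eq_of_not_isRightSpecial (h : factorAt W i n = factorAt W j n)
    (hns : ¬ IsRightSpecial W (factorAt W j n)) : W (i + n) = W (j + n) := by
  by_contra hne
  refine hns ⟨W (i + n), W (j + n), hne, ?_, ?_⟩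
  · rw [← h, ← factorAt_succ]
    exact isFactor_factorAt W i (n + 1)
  · rw [← factorAt_succ]
    exact isFactor_factorAt W j (n + 1)

theorem factorAt_succ_eq_of_not_isRightSpecial (h : factorAt W i n = factorAt W j n)
    (hns : ¬ IsRightSpecial W (factorAt W j n)) :
    factorAt W (i + 1) n = factorAt W (j + 1) n := by
  have hlong : factorAt W i (n + 1) = factorAt W j (n + 1) := by
    rw [factorAt_succ, factorAt_succ, h, apply_add_eq_of_not_isRightSpecial h hns]
  rw [factorAt_succ', factorAt_succ'] at hlong
  exact (List.cons.inj hlong).2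

theorem eventuallyPeriodic_of_factorAt_eq (hij : i < j) (h : factorAt W i n = factorAt W j n)
    (hns : ∀ t, i ≤ t → t < j → ¬ IsRightSpecial W (factorAt W t n)) :
    EventuallyPeriodic W := by
  obtain ⟨p, rfl⟩ := Nat.exists_eq_add_of_le hij.le
  have hp : 0 < p := by omega
  have hns' (t : ℕ) : ¬ IsRightSpecial W (factorAt W (i + t % p) n) :=
    hns _ (by omega) (Nat.add_lt_add_left (Nat.mod_lt t hp) i)
  have hmod (t : ℕ) : factorAt W (i + t) n = factorAt W (i + t % p) n := by
    induction t with
    | zero => rw [Nat.zero_mod]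
    | succ t ih =>
      have hnext := factorAt_succ_eq_of_not_isRightSpecial ih (hns' t)
      rw [add_assoc, add_assoc] at hnext
      rw [hnext, ← Nat.mod_add_mod t p 1]
      obtain hlt | heq := (show t % p + 1 ≤ p from Nat.mod_lt t hp).lt_or_eq
      · rw [Nat.mod_eq_of_lt hlt]
      · rw [heq, Nat.mod_self, add_zero, h]
  have hletter (t : ℕ) : W (i + t + n) = W (i + t % p + n) :=
    apply_add_eq_of_not_isRightSpecial (hmod t) (hns' t)
  refine ⟨p, hp, i + n, fun m hm ↦ ?_⟩
  obtain ⟨t, rfl⟩ := Nat.exists_eq_add_of_le hm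
  calc W (i + n + t + p) = W (i + (t + p) + n) := by congr 1; omega
    _ = W (i + t % p + n) := by rw [hletter, Nat.add_mod_right]
    _ = W (i + n + t) := by rw [← hletter, add_right_comm]

theorem eventuallyPeriodic_of_factorAt_mem {s : Set (List A)} (hs : s.Finite)
    (hns : ∀ u ∈ s, ¬ IsRightSpecial W u)
    (hmem : ∀ e ≤ s.ncard, factorAt W (i + e) n ∈ s) : EventuallyPeriodic W := by
  obtain ⟨x, hx, y, hy, hne, hxy⟩ := Set.exists_ne_map_eq_of_ncard_lt_of_maps_to
    (s := Set.Iic s.ncard) (f := fun e ↦ factorAt W (i + e) n)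
    (by rw [Set.ncard_Iic_nat]; omega) hmem hs
  wlog hlt : x < y generalizing x y
  · exact this y hy x hx hne.symm hxy.symm (hne.lt_or_gt.resolve_left hlt)
  refine eventuallyPeriodic_of_factorAt_eq (Nat.add_lt_add_left hlt i) hxy fun t hit hty ↦ ?_
  obtain ⟨e, rfl⟩ := Nat.exists_eq_add_of_le hit
  rw [Set.mem_Iic] at hy
  exact hns _ (add_assoc i x e ▸ hmem (x + e) (by omega))

theorem exists_isRightSpecial_of_not_eventuallyPeriodic [Finite A]
    (hW : ¬ EventuallyPeriodic W) (n : ℕ) : ∃ u, u.length = n ∧ IsRightSpecial W u := by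
  by_contra! hns
  exact hW <| eventuallyPeriodic_of_factorAt_mem (i := 0) (finite_factorSet W n)
    (fun u hu ↦ hns u hu.1) fun e _ ↦ factorAt_mem_factorSet W (0 + e) n

theorem factorAt_ne_cons_of_palindrome {w : List A} (hw : w.Palindrome) (hcd : c ≠ d)
    (hj : factorAt W j (w.length + 2) = c :: (w ++ [c])) {e : ℕ} (he : e ≤ w.length + 1) :
    factorAt W (j + e) (w.length + 1) ≠ d :: w := by
  intro hdw
  apply hcd
  have hpal : (factorAt W j (w.length + 2)).Palindrome := hj ▸ .cons_concat c hw
  rw [factorAt_succ', factorAt_succ, List.cons.injEq, List.append_singleton_inj] at hj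
  rw [factorAt_succ', List.cons.injEq] at hdw
  obtain ⟨hfirst, hmid, -⟩ := hj
  obtain ⟨hd, htail⟩ := hdw
  have hlast : W (j + (w.length + 1)) = c := by
    rw [← hfirst]
    exact (apply_add_eq_of_palindrome_factorAt hpal (k := 0) (by omega)).symm
  have hreflect : W (j + (w.length + 1 - e)) = d := by
    rw [← hd]
    exact (apply_add_eq_of_palindrome_factorAt hpal (by omega)).symm
  obtain he0 | he0 := Nat.eq_zero_or_pos e
  · rw [← hfirst, ← hd, he0, add_zero]
  obtain hen | hen := he.eq_or_lt
  · rw [← hd, hen, hlast]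
  -- Reflection in `c w c` takes the letter `d`, at `e`, to `|w| + 1 - e`; shifting back by `e`
  -- then lands on the final `c`.
  have hshift := apply_add_eq_of_factorAt_eq (hmid.trans htail.symm) (k := w.length - e) (by omega)
  calc c = W (j + (w.length + 1)) := hlast.symm
    _ = W (j + e + 1 + (w.length - e)) := by congr 1; omega
    _ = W (j + 1 + (w.length - e)) := hshift.symm
    _ = W (j + (w.length + 1 - e)) := by congr 1; omega
    _ = d := hreflect

theorem eventuallyPeriodic_of_palindrome [Finite A] {w : List A} (hw : w.Palindrome)
    (hcd : c ≠ d) (hcwc : IsFactor W (c :: (w ++ [c]))) (hdw : IsFactor W (d :: w))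
    (huniq : ∀ u, u.length = w.length + 1 → IsRightSpecial W u → u = d :: w)
    (hcomp : complexity W (w.length + 1) ≤ w.length + 2) : EventuallyPeriodic W := by
  obtain ⟨j, hj⟩ := hcwc
  have hcard : (factorSet W (w.length + 1) \ {d :: w}).ncard ≤ w.length + 1 := by
    rw [Set.ncard_sdiff_singleton_of_mem (show d :: w ∈ factorSet W _ from ⟨List.length_cons, hdw⟩)]
    exact Nat.sub_le_of_le_add hcomp
  refine eventuallyPeriodic_of_factorAt_mem (i := j) (finite_factorSet W _).sdiff
    (fun u hu hspecial ↦ hu.2 (huniq u hu.1.1 hspecial)) fun e he ↦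
    ⟨factorAt_mem_factorSet W (j + e) _, ?_⟩
  exact factorAt_ne_cons_of_palindrome hw hcd (by simpa using hj.symm) (he.trans hcard)

end RightSpecial

section BinaryComplexity

variable {W : ℕ → Bool} {u : List Bool}

theorem isRightSpecial_iff : IsRightSpecial W u ↔
    IsFactor W (u ++ [true]) ∧ IsFactor W (u ++ [false]) := by
  refine ⟨?_, fun h ↦ ⟨true, false, nofun, h⟩⟩
  rintro ⟨_ | _, _ | _, hab, ha, hb⟩
  · exact absurd rfl hab
  · exact ⟨hb, ha⟩
  · exact ⟨ha, hb⟩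
  · exact absurd rfl hab

theorem complexity_succ (W : ℕ → Bool) (n : ℕ) :
    complexity W (n + 1) = complexity W n + {u | u.length = n ∧ IsRightSpecial W u}.ncard := by
  let E (c : Bool) : Set (List Bool) := {u | u.length = n ∧ IsFactor W (u ++ [c])}
  have hE (c : Bool) : (E c).Finite := (List.finite_length_eq Bool n).subset fun _ hu ↦ hu.1
  have hunion : factorSet W n = E true ∪ E false := by
    ext u
    refine ⟨fun ⟨hlen, hu⟩ ↦ ?_, ?_⟩
    · obtain ⟨_ | _, ha⟩ := hu.exists_concat
      exacts [Or.inr ⟨hlen, ha⟩, Or.inl ⟨hlen, ha⟩]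
    · rintro (⟨hlen, hu⟩ | ⟨hlen, hu⟩) <;>
        exact ⟨hlen, hu.of_infix (List.prefix_append u _).isInfix⟩
  have hinter : {u | u.length = n ∧ IsRightSpecial W u} = E true ∩ E false := by
    ext u
    simp only [E, isRightSpecial_iff, Set.mem_inter_iff, Set.mem_ofPred_eq]
    tauto
  have hsucc : factorSet W (n + 1) = (· ++ [true]) '' E true ∪ (· ++ [false]) '' E false := by
    ext u
    refine ⟨fun ⟨hlen, hu⟩ ↦ ?_, ?_⟩
    · obtain rfl | ⟨v, _ | _, rfl⟩ := u.eq_nil_or_concat'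
      · simp at hlen
      · exact Or.inr ⟨v, ⟨by simpa using hlen, hu⟩, rfl⟩
      · exact Or.inl ⟨v, ⟨by simpa using hlen, hu⟩, rfl⟩
    · rintro (⟨v, ⟨rfl, hv⟩, rfl⟩ | ⟨v, ⟨rfl, hv⟩, rfl⟩) <;> exact ⟨by simp, hv⟩
  have hdisj : Disjoint ((· ++ [true]) '' E true) ((· ++ [false]) '' E false) := by
    rw [Set.disjoint_left]
    rintro _ ⟨u, -, rfl⟩ ⟨v, -, h⟩
    simpa using List.append_inj_right' h rfl
  calc complexity W (n + 1)
      = ((· ++ [true]) '' E true ∪ (· ++ [false]) '' E false).ncard := by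
        rw [← hsucc, ncard_factorSet]
    _ = (E true).ncard + (E false).ncard := by
      rw [Set.ncard_union_eq hdisj ((hE true).image _) ((hE false).image _),
        Set.ncard_image_of_injective _ (List.append_left_injective _),
        Set.ncard_image_of_injective _ (List.append_left_injective _)]
    _ = (E true ∪ E false).ncard + (E true ∩ E false).ncard :=
      (Set.ncard_union_add_ncard_inter _ _ (hE true) (hE false)).symm
    _ = complexity W n + {u | u.length = n ∧ IsRightSpecial W u}.ncard := by
      rw [← hunion, ← hinter, ncard_factorSet]

theorem complexity_eq_succ_iff_existsUnique_isRightSpecial :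
    (∀ n, complexity W n = n + 1) ↔ ∀ n, ∃! u, u.length = n ∧ IsRightSpecial W u := by
  have hncard (n : ℕ) : {u | u.length = n ∧ IsRightSpecial W u}.ncard = 1 ↔
      ∃! u, u.length = n ∧ IsRightSpecial W u := by
    simp only [Set.ncard_eq_one, Set.eq_singleton_iff_unique_mem]
    rfl
  simp only [← hncard]
  refine ⟨fun h n ↦ ?_, fun h n ↦ ?_⟩
  · have := complexity_succ W n
    rw [h, h] at this
    omega
  · induction n with
    | zero => exact complexity_zero W
    | succ n ih => rw [complexity_succ, ih, h]

end BinaryComplexity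

section Balance

variable {W : ℕ → Bool} {u v : List Bool}

theorem balancedWord_iff : BalancedWord W ↔ ∀ u v, IsFactor W u → IsFactor W v →
    u.length = v.length → u.count true ≤ v.count true + 1 := by
  refine ⟨fun h u v hu hv hlen ↦ ?_, fun h u v hu hv hlen ↦ ?_⟩
  · have := h u v hu hv hlen
    omega
  · have := h u v hu hv hlen
    have := h v u hv hu hlen.symm
    omega

theorem BalancedWord.not_isFactor_false_cons_concat_false (hW : BalancedWord W) {z : List Bool}
    (hz : IsFactor W (true :: (z ++ [true]))) : ¬ IsFactor W (false :: (z ++ [false])) := by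
  intro hz'
  simpa using balancedWord_iff.1 hW _ _ hz hz' (by simp)

theorem BalancedWord.isRightSpecial_unique (hW : BalancedWord W) (hu : IsRightSpecial W u)
    (hv : IsRightSpecial W v) (hlen : u.length = v.length) : u = v := by
  by_contra hne
  obtain ⟨x, y, a, b, z, hab, rfl, rfl⟩ := exists_eq_append_cons_of_ne hlen hne
  have haz := isRightSpecial_iff.1 (hu.of_suffix (List.suffix_append x _))
  have hbz := isRightSpecial_iff.1 (hv.of_suffix (List.suffix_append y _))
  cases a <;> cases b
  · exact hab rfl
  · exact hW.not_isFactor_false_cons_concat_false hbz.1 haz.2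
  · exact hW.not_isFactor_false_cons_concat_false haz.1 hbz.2
  · exact hab rfl

theorem exists_minimal_unbalanced_of_not_balancedWord (hW : ¬ BalancedWord W) :
    ∃ u v, IsFactor W u ∧ IsFactor W v ∧ u.length = v.length ∧
      v.count true + 2 ≤ u.count true ∧
      ∀ x y, IsFactor W x → IsFactor W y → x.length = y.length → x.length < u.length →
        x.count true ≤ y.count true + 1 := by
  classical
  have hex : ∃ n u v, IsFactor W u ∧ IsFactor W v ∧ u.length = n ∧ v.length = n ∧
      v.count true + 2 ≤ u.count true := by
    rw [balancedWord_iff] at hW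
    push Not at hW
    obtain ⟨u, v, hu, hv, hlen, hcount⟩ := hW
    exact ⟨v.length, u, v, hu, hv, hlen, rfl, hcount⟩
  obtain ⟨u, v, hu, hv, hlen, hlen', hcount⟩ := Nat.find_spec hex
  refine ⟨u, v, hu, hv, hlen.trans hlen'.symm, hcount, fun x y hx hy hxy hlt ↦ ?_⟩
  by_contra! h
  exact Nat.find_min hex (hlen ▸ hlt) ⟨x, y, hx, hy, rfl, hxy.symm, h⟩

theorem exists_palindrome_of_not_balancedWord (hW : ¬ BalancedWord W) :
    ∃ w : List Bool, w.Palindrome ∧ IsFactor W (true :: (w ++ [true])) ∧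
      IsFactor W (false :: (w ++ [false])) := by
  obtain ⟨u, v, hu, hv, hlen, hcount, hmin⟩ := exists_minimal_unbalanced_of_not_balancedWord hW
  obtain ⟨w, huw, hvw⟩ := exists_eq_cons_concat_of_minimal_unbalanced hlen hcount
    fun x y hx hy ↦ hmin x y (hu.of_infix hx) (hv.of_infix hy)
  -- Counts ignore order, so the pair `u`, `v.reverse` is minimal unbalanced as well.
  obtain ⟨w', huw', hvw'⟩ := exists_eq_cons_concat_of_minimal_unbalanced (u := u) (v := v.reverse)
    (by rwa [List.length_reverse]) (by rwa [List.count_reverse]) fun x y hx hy hxy hlt ↦ by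
      rw [← y.count_reverse]
      rw [← List.reverse_infix, List.reverse_reverse] at hy
      exact hmin x y.reverse (hu.of_infix hx) (hv.of_infix hy) (by rwa [List.length_reverse]) hlt
  obtain rfl : w = w' := by simpa using huw.symm.trans huw'
  subst huw hvw
  exact ⟨w, .of_reverse_eq (by simpa using hvw'), hu, hv⟩

theorem balancedWord_of_complexity_eq_succ (hcomp : ∀ n, complexity W n = n + 1) :
    BalancedWord W := by
  by_contra hbal
  obtain ⟨w, hw, htrue, hfalse⟩ := exists_palindrome_of_not_balancedWord hbal
  have huniq := complexity_eq_succ_iff_existsUnique_isRightSpecial.1 hcomp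
  have hspecial : IsRightSpecial W w := isRightSpecial_iff.2
    ⟨htrue.of_infix (List.suffix_cons _ _).isInfix, hfalse.of_infix (List.suffix_cons _ _).isInfix⟩
  obtain ⟨z, ⟨hzlen, hz⟩, hz_unique⟩ := huniq (w.length + 1)
  obtain ⟨d, z, rfl⟩ := List.exists_cons_of_length_eq_add_one hzlen
  obtain rfl : z = w := (huniq w.length).unique
    ⟨by simpa using hzlen, hz.of_suffix (List.suffix_cons d z)⟩ ⟨rfl, hspecial⟩
  have hcwc : IsFactor W ((!d) :: (z ++ [!d])) := by cases d <;> assumption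
  refine not_eventuallyPeriodic_of_complexity_eq_succ hcomp ?_
  exact eventuallyPeriodic_of_palindrome hw (Bool.not_ne_self d) hcwc hz.isFactor
    (fun u hlen hu ↦ hz_unique u ⟨hlen, hu⟩) (hcomp _).le

end Balance

/-- A one-sided infinite word over a two-letter alphabet has complexity
`T_W(n) = n + 1` for all `n ≥ 0` if and only if it is balanced and not
eventually periodic. -/
theorem sturmian_iff_balanced_aperiodic (W : ℕ → Bool) :
    (∀ n : ℕ, complexity W n = n + 1) ↔
      (BalancedWord W ∧ ¬ EventuallyPeriodic W) := by
  refine ⟨fun hcomp ↦ ?_, fun ⟨hbal, haper⟩ ↦ ?_⟩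
  · exact ⟨balancedWord_of_complexity_eq_succ hcomp,
      not_eventuallyPeriodic_of_complexity_eq_succ hcomp⟩
  · refine complexity_eq_succ_iff_existsUnique_isRightSpecial.2 fun n ↦ ?_
    obtain ⟨u, hlen, hu⟩ := exists_isRightSpecial_of_not_eventuallyPeriodic haper n
    exact ⟨u, ⟨hlen, hu⟩, fun v ⟨hlen', hv⟩ ↦
      hbal.isRightSpecial_unique hv hu (hlen'.trans hlen.symm)⟩
end

section
/- Let α be an irrational real number, let x₀ be a point of the circle ℝ/ℤ, and let U be a half-open arc of length α in ℝ/ℤ. Define the infinite word W over {a, b} by W(n) = a if x₀ + nα (mod 1) lies in U and W(n) = b otherwise. Then the complexity function of W satisfies T_W(n) = n + 1 for all n ≥ 0. -/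
/-- `U` is a half-open arc of length `len` in the circle `ℝ/ℤ`. -/
def IsHalfOpenArc (U : Set (AddCircle (1 : ℝ))) (len : ℝ) : Prop :=
  0 < len ∧ len < 1 ∧
    ∃ c : ℝ, U = (fun x : ℝ => (x : AddCircle (1 : ℝ))) '' Set.Ico c (c + len)

/-!
The word is a lower mechanical word `W n = ⌊z + (n + 1)α⌋ - ⌊z + nα⌋`, so the number of `a`s among
the `m` letters from position `i` on is `⌊z + (i + m)α⌋ - ⌊z + iα⌋`. As a function of the
fractional part `t` of `z + iα`, this count takes two consecutive values and jumps where `t` passes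
the fractional part of `-mα`. A factor of length `n` amounts to these counts for `m = 1, …, n`, and
hence to the set of cut points `-α, …, -nα` (mod 1) that do not exceed `t`. Since `α` is
irrational, the `n` cut points are distinct and the values of `t` are dense in `[0, 1)`, so that
exactly `n + 1` such sets occur.
-/

section Words

variable {A ι β : Type*} {W : ℕ → A}

theorem setOf_isFactor_length_eq_range (W : ℕ → A) (n : ℕ) :
    {u : List A | u.length = n ∧ IsFactor W u} = Set.range fun i => factorAt W i n := by
  ext u
  constructor
  · rintro ⟨rfl, i, hi⟩
    exact ⟨i, hi.symm⟩
  · rintro ⟨i, rfl⟩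
    have hlength : (factorAt W i n).length = n := by simp [factorAt]
    exact ⟨hlength, i, by rw [hlength]⟩

theorem ncard_range_eq_of_eq_iff_eq {γ : Type*} {f : ι → β} {g : ι → γ}
    (h : ∀ i j, f i = f j ↔ g i = g j) : (Set.range f).ncard = (Set.range g).ncard := by
  have hker : Setoid.ker f = Setoid.ker g := Setoid.ext h
  rw [← Nat.card_coe_set_eq, ← Nat.card_coe_set_eq,
    ← Nat.card_congr (Setoid.quotientKerEquivRange f), hker,
    Nat.card_congr (Setoid.quotientKerEquivRange g)]

theorem complexity_eq_ncard_range {n : ℕ} {g : ℕ → β}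
    (hg : ∀ i j, factorAt W i n = factorAt W j n ↔ g i = g j) :
    complexity W n = (Set.range g).ncard := by
  rw [complexity, setOf_isFactor_length_eq_range, ncard_range_eq_of_eq_iff_eq hg]

theorem forall_lt_eq_iff_forall_sum_range_eq {M : Type*} [AddCancelCommMonoid M]
    {f g : ℕ → M} {n : ℕ} :
    (∀ j < n, f j = g j) ↔
      ∀ m ∈ Finset.Icc 1 n, ∑ j ∈ Finset.range m, f j = ∑ j ∈ Finset.range m, g j := by
  constructor
  · intro h m hm
    exact Finset.sum_congr rfl fun j hj =>
      h j ((Finset.mem_range.1 hj).trans_le (Finset.mem_Icc.1 hm).2)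
  · intro h j hj
    have hsum : ∀ m ≤ n, ∑ j ∈ Finset.range m, f j = ∑ j ∈ Finset.range m, g j := by
      intro m hm
      rcases m.eq_zero_or_pos with rfl | hpos
      · rfl
      · exact h m (Finset.mem_Icc.2 ⟨hpos, hm⟩)
    have hsucc := hsum (j + 1) hj
    rwa [Finset.sum_range_succ, Finset.sum_range_succ, hsum j hj.le, add_right_inj] at hsucc

theorem factorAt_eq_iff_forall_sum_eq {M : Type*} [AddCancelCommMonoid M] {φ : A → M}
    (hφ : Function.Injective φ) {i i' n : ℕ} :
    factorAt W i n = factorAt W i' n ↔ ∀ m ∈ Finset.Icc 1 n,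
      ∑ j ∈ Finset.range m, φ (W (i + j)) = ∑ j ∈ Finset.range m, φ (W (i' + j)) := by
  rw [← forall_lt_eq_iff_forall_sum_range_eq]
  simp only [factorAt, List.map_inj_left, List.mem_range, hφ.eq_iff]

end Words

section Counting

open scoped Finset

variable {R : Type*} [LinearOrder R] {S : Finset R}

theorem card_filter_le_eq_iff {x y : R} :
    #{s ∈ S | s ≤ x} = #{s ∈ S | s ≤ y} ↔ ∀ s ∈ S, s ≤ x ↔ s ≤ y := by
  rw [← Finset.filter_inj']
  refine ⟨fun hcard => ?_, fun h => by rw [h]⟩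
  have subset_of_le {x y : R} (hxy : x ≤ y) : {s ∈ S | s ≤ x} ⊆ {s ∈ S | s ≤ y} :=
    Finset.monotone_filter_right S fun s _ hs => le_trans hs hxy
  rcases le_total x y with hxy | hyx
  · exact Finset.eq_of_subset_of_card_le (subset_of_le hxy) hcard.ge
  · exact (Finset.eq_of_subset_of_card_le (subset_of_le hyx) hcard.le).symm

theorem exists_Ioo_card_filter_le_eq {a b : R} (hab : a < b) (hS : ∀ s ∈ S, s ∈ Set.Ioo a b)
    {k : ℕ} (hk : k ≤ #S) :
    ∃ c d, a ≤ c ∧ c < d ∧ d ≤ b ∧ ∀ x ∈ Set.Ioo c d, #{s ∈ S | s ≤ x} = k := by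
  induction S using Finset.induction_on_max generalizing b with
  | empty => exact ⟨a, b, le_rfl, hab, le_rfl, fun x _ => (Nat.le_zero.1 hk).symm⟩
  | insert m S hm ih =>
    have hmS : m ∉ S := fun h => lt_irrefl m (hm m h)
    obtain ⟨ham, hmb⟩ := hS m (Finset.mem_insert_self m S)
    rw [Finset.card_insert_of_notMem hmS] at hk
    rcases hk.eq_or_lt with rfl | hk
    · refine ⟨m, b, ham.le, hmb, le_rfl, fun x hx => ?_⟩
      rw [Finset.filter_true_of_mem, Finset.card_insert_of_notMem hmS]
      exact Finset.forall_mem_insert .. |>.2 ⟨hx.1.le, fun s hs => ((hm s hs).trans hx.1).le⟩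
    · obtain ⟨c, d, hac, hcd, hdm, hcount⟩ := ih ham
        (fun s hs => ⟨(hS s (Finset.mem_insert_of_mem hs)).1, hm s hs⟩) (Nat.lt_succ_iff.1 hk)
      refine ⟨c, d, hac, hcd, hdm.trans hmb.le, fun x hx => ?_⟩
      rw [Finset.filter_insert, if_neg (hx.2.trans_le hdm).not_ge, hcount x hx]

theorem range_card_filter_le {ι : Type*} {a b : R} (hab : a < b)
    (hS : ∀ s ∈ S, s ∈ Set.Ioo a b) {x : ι → R}
    (hx : ∀ c d, a ≤ c → c < d → d ≤ b → ∃ i, x i ∈ Set.Ioo c d) :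
    Set.range (fun i => #{s ∈ S | s ≤ x i}) = Set.Iic #S := by
  refine Set.Subset.antisymm (Set.range_subset_iff.2 fun i => Finset.card_filter_le S _) ?_
  intro k hk
  obtain ⟨c, d, hac, hcd, hdb, hcount⟩ := exists_Ioo_card_filter_le_eq hab hS hk
  obtain ⟨i, hi⟩ := hx c d hac hcd hdb
  exact ⟨i, hcount (x i) hi⟩

end Counting

section Circle

variable {α : ℝ}

theorem floor_sub_floor_sub {R : Type*} [CommRing R] [LinearOrder R] [IsStrictOrderedRing R]
    [FloorRing R] (s u : R) :
    ⌊s⌋ - ⌊s - u⌋ = ⌊u⌋ + if Int.fract s < Int.fract u then 1 else 0 := by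
  have hs := Int.floor_add_fract s
  have hu := Int.floor_add_fract u
  rw [sub_eq_iff_eq_add, ← sub_eq_iff_eq_add', eq_comm, Int.floor_eq_iff]
  split_ifs <;> push_cast <;> constructor <;>
    linarith [Int.fract_nonneg s, Int.fract_lt_one s, Int.fract_nonneg u, Int.fract_lt_one u]

theorem coe_mem_image_iff_toIcoMod_mem {𝕜 : Type*} [AddCommGroup 𝕜] [LinearOrder 𝕜]
    [IsOrderedAddMonoid 𝕜] [Archimedean 𝕜] {p c x : 𝕜} (hp : 0 < p) {s : Set 𝕜}
    (hs : s ⊆ Set.Ico c (c + p)) :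
    (x : AddCircle p) ∈ (fun y : 𝕜 => (y : AddCircle p)) '' s ↔ toIcoMod hp c x ∈ s := by
  have : Fact (0 < p) := ⟨hp⟩
  have hcoe : ((toIcoMod hp c x : 𝕜) : AddCircle p) = x :=
    AddCircle.coe_equivIco (a := c) (y := (x : AddCircle p))
  refine ⟨?_, fun h => ⟨_, h, hcoe⟩⟩
  rintro ⟨y, hy, hyx⟩
  rwa [(AddCircle.coe_eq_coe_iff_of_mem_Ico (toIcoMod_mem_Ico hp c x) (hs hy)).1
    (hcoe.trans hyx.symm)]

theorem denseRange_coe_add_natCast_mul (hα : Irrational α) (z : ℝ) :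
    DenseRange fun i : ℕ => ((z + i * α : ℝ) : UnitAddCircle) := by
  have hrot : DenseRange fun i : ℕ => i • (α : UnitAddCircle) := by
    rw [← denseRange_zsmul_iff_nsmul, AddCircle.denseRange_zsmul_coe_iff, div_one]
    exact hα
  have hshift := (Homeomorph.addLeft (z : UnitAddCircle)).surjective.denseRange.comp hrot
    (Homeomorph.addLeft (z : UnitAddCircle)).continuous
  convert hshift using 2 with i
  simp [← nsmul_eq_mul]

theorem exists_fract_add_natCast_mul_mem_Ioo (hα : Irrational α) (z : ℝ) {a b : ℝ}
    (ha : 0 ≤ a) (hab : a < b) (hb : b ≤ 1) :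
    ∃ i : ℕ, Int.fract (z + i * α) ∈ Set.Ioo a b := by
  have hopen : IsOpen ((fun y : ℝ => (y : UnitAddCircle)) '' Set.Ioo a b) :=
    QuotientAddGroup.isOpenMap_coe _ isOpen_Ioo
  obtain ⟨i, hi⟩ := (denseRange_coe_add_natCast_mul hα z).exists_mem_open hopen
    ((Set.nonempty_Ioo.2 hab).image _)
  have hsub : Set.Ioo a b ⊆ Set.Ico 0 (0 + 1) := by
    rw [zero_add]
    exact (Set.Ioo_subset_Ioo ha hb).trans Set.Ioo_subset_Ico_self
  refine ⟨i, ?_⟩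
  rwa [coe_mem_image_iff_toIcoMod_mem one_pos hsub, toIcoMod_zero_one] at hi

end Circle

section CutPoints

open scoped Finset

variable {α : ℝ} {n : ℕ}

/-- The representatives in `[0, 1)` of the points `-α, -2α, …, -nα` of the circle. Together with
`0` they cut the circle into the arcs on which the coding of a starting point by `n` letters is
constant. -/
noncomputable def cutPoints (α : ℝ) (n : ℕ) : Finset ℝ :=
  (Finset.Icc 1 n).image fun m : ℕ => Int.fract (-(m * α))

theorem injective_fract_neg_natCast_mul (hα : Irrational α) :
    Function.Injective fun m : ℕ => Int.fract (-(m * α)) := by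
  intro i j hij
  obtain ⟨k, hk⟩ := Int.fract_eq_fract.1 hij
  by_contra hne
  have hsub : (j - i : ℤ) ≠ 0 := sub_ne_zero.2 (Nat.cast_injective.ne (Ne.symm hne))
  refine (hα.intCast_mul hsub).ne_int k ?_
  rw [← hk]
  push_cast
  ring

theorem card_cutPoints (hα : Irrational α) (n : ℕ) : #(cutPoints α n) = n := by
  rw [cutPoints, Finset.card_image_of_injective _ (injective_fract_neg_natCast_mul hα),
    Nat.card_Icc, Nat.add_sub_cancel]

theorem cutPoints_mem_Ioo (hα : Irrational α) : ∀ θ ∈ cutPoints α n, θ ∈ Set.Ioo (0 : ℝ) 1 := by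
  refine Finset.forall_mem_image.2 fun m hm => ⟨Int.fract_pos.2 ?_, Int.fract_lt_one _⟩
  have hm0 : m ≠ 0 := Nat.one_le_iff_ne_zero.1 (Finset.mem_Icc.1 hm).1
  exact (hα.natCast_mul hm0).neg.ne_int _

end CutPoints

/-- `W` is the lower mechanical word `n ↦ ⌊z + (n + 1)α⌋ - ⌊z + nα⌋` of slope `α` and intercept
`z`, with `true` and `false` standing for the letters `1` and `0`. -/
def IsLowerMechanical (W : ℕ → Bool) (α z : ℝ) : Prop :=
  ∀ n : ℕ, (W n).toInt = ⌊z + (n + 1 : ℕ) * α⌋ - ⌊z + n * α⌋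

namespace IsLowerMechanical

open scoped Finset

variable {W : ℕ → Bool} {α z : ℝ}

theorem sum_toInt (h : IsLowerMechanical W α z) (i m : ℕ) :
    ∑ j ∈ Finset.range m, (W (i + j)).toInt =
      -(⌊-(m * α)⌋ + if Int.fract (z + i * α) < Int.fract (-(m * α)) then 1 else 0) := by
  calc ∑ j ∈ Finset.range m, (W (i + j)).toInt
      = ⌊z + (i + m : ℕ) * α⌋ - ⌊z + i * α⌋ := by
        simp only [h _, add_assoc]
        exact Finset.sum_range_sub (fun j => ⌊z + (i + j : ℕ) * α⌋) m
    _ = -(⌊z + i * α⌋ - ⌊z + i * α - -(m * α)⌋) := by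
        rw [neg_sub, sub_neg_eq_add, Nat.cast_add, add_mul, add_assoc]
    _ = _ := by rw [floor_sub_floor_sub]

theorem factorAt_eq_iff (h : IsLowerMechanical W α z) {i i' n : ℕ} :
    factorAt W i n = factorAt W i' n ↔
      ∀ θ ∈ cutPoints α n, θ ≤ Int.fract (z + i * α) ↔ θ ≤ Int.fract (z + i' * α) := by
  have toInt_injective : Function.Injective Bool.toInt := by decide
  rw [factorAt_eq_iff_forall_sum_eq toInt_injective, cutPoints, Finset.forall_mem_image]
  refine forall₂_congr fun m _ => ?_
  rw [h.sum_toInt, h.sum_toInt, neg_inj, add_right_inj, ← not_lt, ← not_lt, not_iff_not]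
  split_ifs <;> simp [*]

theorem complexity_eq (h : IsLowerMechanical W α z) (hα : Irrational α) (n : ℕ) :
    complexity W n = n + 1 := by
  calc complexity W n
      = (Set.range fun i : ℕ => #{θ ∈ cutPoints α n | θ ≤ Int.fract (z + i * α)}).ncard :=
        complexity_eq_ncard_range fun i i' => by rw [h.factorAt_eq_iff, card_filter_le_eq_iff]
    _ = (Set.Iic #(cutPoints α n)).ncard := by
        rw [range_card_filter_le one_pos (cutPoints_mem_Ioo hα)
          fun _ _ => exists_fract_add_natCast_mul_mem_Ioo hα z]
    _ = n + 1 := by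
        rw [card_cutPoints hα, ← Finset.coe_Iic, Set.ncard_coe_finset, Nat.card_Iic]

end IsLowerMechanical

theorem isLowerMechanical_of_forall_eq_true_iff {W : ℕ → Bool} {α c x₀ : ℝ} (hα₀ : 0 ≤ α)
    (hα₁ : α < 1)
    (hW : ∀ n : ℕ, W n = true ↔ ((x₀ + n * α : ℝ) : UnitAddCircle) ∈
      (fun x : ℝ => (x : UnitAddCircle)) '' Set.Ico c (c + α)) :
    IsLowerMechanical W α (x₀ - c - α) := by
  intro n
  have hletter : W n = true ↔ Int.fract (x₀ + n * α - c) < Int.fract α := by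
    rw [hW, coe_mem_image_iff_toIcoMod_mem one_pos (Set.Ico_subset_Ico_right (by gcongr)),
      toIcoMod_eq_add_fract_mul, div_one, mul_one, Int.fract_eq_self.2 ⟨hα₀, hα₁⟩, Set.mem_Ico,
      add_lt_add_iff_left, and_iff_right (le_add_of_nonneg_right (Int.fract_nonneg _))]
  calc (W n).toInt = ⌊α⌋ + if Int.fract (x₀ + n * α - c) < Int.fract α then 1 else 0 := by
        rw [Int.floor_eq_zero_iff.2 ⟨hα₀, hα₁⟩, zero_add]
        simp only [← hletter]
        cases W n <;> rfl
    _ = ⌊x₀ + n * α - c⌋ - ⌊x₀ + n * α - c - α⌋ := (floor_sub_floor_sub _ _).symm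
    _ = ⌊x₀ - c - α + (n + 1 : ℕ) * α⌋ - ⌊x₀ - c - α + n * α⌋ := by
        congr 2 <;> push_cast <;> ring

/-- A mechanical word: if `α` is irrational, `x₀` a point of the circle `ℝ/ℤ`,
`U ⊆ ℝ/ℤ` a half-open arc of length `α`, and `W(n) = a` (here `true`) exactly
when `x₀ + nα (mod 1)` lies in `U`, then the complexity of `W` is
`T_W(n) = n + 1` for all `n ≥ 0`. -/
theorem mechanical_word_complexity (α : ℝ) (hα : Irrational α) (x₀ : ℝ)
    (U : Set (AddCircle (1 : ℝ))) (hU : IsHalfOpenArc U α) (W : ℕ → Bool)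
    (hW : ∀ n : ℕ, W n = true ↔ ((x₀ + n * α : ℝ) : AddCircle (1 : ℝ)) ∈ U) :
    ∀ n : ℕ, complexity W n = n + 1 := by
  intro n
  obtain ⟨hpos, hlt, c, rfl⟩ := hU
  exact (isLowerMechanical_of_forall_eq_true_iff hpos.le hlt hW).complexity_eq hα n
end
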